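/- Let R be a (possibly noncommutative) domain. For any Laurent series f, g over R with g ≠ 0, either there exists u ∈ LaurentSeries R with f = g·u, or there exist u, v ∈ LaurentSeries R with f = g·u + v and v ≠ 0 such that ψ(g) does not right-divide ψ(v) in R (i.e. there is no q ∈ R with ψ(v) = ψ(g)·q). -/

import Mathlib

/-- For a nonzero Laurent series `f`, `psi f` is the coefficient of its lowest-degree term
(its leading coefficient); `psi 0 = 0`. -/
noncomputable def psi {R : Type*} [Ring R] (f : LaurentSeries R) : R := f.coeff f.order

/-- `φ` is a norm on `R`: `φ a = 0 ↔ a = 0` and `φ (a * b) ≥ φ a`. -/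
def IsNorm {R : Type*} [Ring R] (φ : R → ℕ) : Prop :=
  (∀ a : R, φ a = 0 ↔ a = 0) ∧ (∀ a b : R, φ a ≤ φ (a * b))

/-- `R` is right ω-Euclidean with respect to `φ`: for all `a b` with `b ≠ 0` there is a
right `k`-stage division chain `a = b q₁ + r₁, b = r₁ q₂ + r₂, …, r_{k-2} = r_{k-1} q_k + r_k`
with `φ r_k < φ b`.  Here `s 0 = a`, `s 1 = b` and `s (i+2) = r_{i+1}`. -/
def IsRightOmegaEuclidean {R : Type*} [Ring R] (φ : R → ℕ) : Prop :=
  ∀ a b : R, b ≠ 0 → ∃ (k : ℕ) (s q : ℕ → R), 1 ≤ k ∧ s 0 = a ∧ s 1 = b ∧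
    (∀ i < k, s i = s (i + 1) * q (i + 1) + s (i + 2)) ∧ φ (s (k + 1)) < φ b

/-!
Replacing `u` by `u + c x ^ (ord v - ord g)` with `ψ v = ψ g * c` raises the order of the remainder
`v = f - g u`. Since `g u` is determined below `ord v` by the coefficients of `u` below
`ord v - ord g`, successive corrections converge: well-ordered supports glue along any chain of
compatible initial segments (Hahn series are spherically complete). By Zorn's lemma some `u` admits
no further correction, so either `f = g u` or `ψ v` is not a right multiple of `ψ g`. Zorn's lemma
in place of a sequence of corrections allows exponents in any linearly ordered abelian group.
-/

open HahnSeries Set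

theorem isWF_of_forall_inter_Iio {α : Type*} [Preorder α] {s : Set α}
    (h : ∀ a ∈ s, (s ∩ Iio a).IsWF) : s.IsWF := by
  rw [isWF_iff_no_descending_seq]
  intro a ha has
  refine isWF_iff_no_descending_seq.mp (h (a 0) (has 0)) (fun n ↦ a (n + 1))
    (ha.comp_strictMono (strictMono_id.add_const 1)) fun n ↦ ?_
  exact ⟨has _, ha n.succ_pos⟩

section SphericalCompleteness

variable {Γ R : Type*} [LinearOrder Γ] [Zero R]

theorem exists_forall_eqOn_coeff_Iio {ι : Type*} {u : ι → HahnSeries Γ R} {e : ι → Γ}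
    (hu : ∀ i j, EqOn (u i).coeff (u j).coeff (Iio (e i) ∩ Iio (e j))) :
    ∃ w : HahnSeries Γ R, ∀ i, EqOn w.coeff (u i).coeff (Iio (e i)) := by
  classical
  let c : Γ → R := fun k ↦ if h : ∃ i, k < e i then (u h.choose).coeff k else 0
  have c_eqOn (i : ι) : EqOn c (u i).coeff (Iio (e i)) := fun k hk ↦ by
    have h : ∃ i, k < e i := ⟨i, hk⟩
    simpa only [c, dif_pos h] using hu h.choose i ⟨h.choose_spec, hk⟩
  have c_support : c.support.IsWF := isWF_of_forall_inter_Iio fun k hk ↦ by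
    obtain ⟨i, hi⟩ : ∃ i, k < e i := by
      by_contra h
      exact hk (dif_neg h)
    refine (u i).isWF_support.mono fun j hj ↦ ?_
    rw [HahnSeries.mem_support, ← c_eqOn i (hj.2.trans hi)]
    exact hj.1
  exact ⟨⟨c, c_support.isPWO⟩, c_eqOn⟩

theorem exists_forall_le_of_eqOn_coeff_Iio {e : HahnSeries Γ R → Γ}
    (he : ∀ u w, EqOn w.coeff u.coeff (Iio (e u)) → e u ≤ e w) :
    ∃ u, ∀ w, EqOn w.coeff u.coeff (Iio (e u)) → e w ≤ e u := by
  let Refines (u w : HahnSeries Γ R) : Prop := EqOn w.coeff u.coeff (Iio (e u))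
  have refines_trans {u v w} (huv : Refines u v) (hvw : Refines v w) : Refines u w :=
    (hvw.mono (Iio_subset_Iio (he u v huv))).trans huv
  have chain_bounded (C : Set (HahnSeries Γ R)) (hC : IsChain Refines C) :
      ∃ w, ∀ u ∈ C, Refines u w := by
    have compatible (u v : C) :
        EqOn u.1.coeff v.1.coeff (Iio (e u) ∩ Iio (e v)) := by
      rcases eq_or_ne u v with rfl | huv
      · exact eqOn_refl _ _
      rcases hC u.2 v.2 (Subtype.coe_ne_coe.mpr huv) with h | h
      · exact (h.mono inter_subset_left).symm
      · exact h.mono inter_subset_right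
    obtain ⟨w, hw⟩ := exists_forall_eqOn_coeff_Iio compatible
    exact ⟨w, fun u hu ↦ hw ⟨u, hu⟩⟩
  obtain ⟨u, hu⟩ := exists_maximal_of_chains_bounded chain_bounded refines_trans
  exact ⟨u, fun w hw ↦ he w u (hu w hw)⟩

end SphericalCompleteness

section Division

variable {Γ R : Type*} [AddCommGroup Γ] [LinearOrder Γ] [IsOrderedAddMonoid Γ]
  [NonUnitalNonAssocRing R] {f g u v w : HahnSeries Γ R}

theorem coeff_mul_eqOn_Iio {m : Γ} (h : EqOn w.coeff u.coeff (Iio (m - g.order))) :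
    EqOn (g * w).coeff (g * u).coeff (Iio m) := by
  intro k hk
  rcases eq_or_ne g 0 with rfl | hg
  · simp only [zero_mul]
  have le_orderTop_sub : ((m - g.order : Γ) : WithTop Γ) ≤ (w - u).orderTop :=
    le_orderTop_iff_forall.mpr fun j hj ↦ by
      rw [coeff_sub, h (WithTop.coe_lt_coe.mp hj), sub_self]
  have le_orderTop_mul : (m : WithTop Γ) ≤ (g * (w - u)).orderTop := calc
    (m : WithTop Γ) = g.orderTop + ((m - g.order : Γ) : WithTop Γ) := by
      rw [← order_eq_orderTop_of_ne_zero hg, ← WithTop.coe_add, add_sub_cancel]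
    _ ≤ g.orderTop + (w - u).orderTop := by gcongr
    _ ≤ (g * (w - u)).orderTop := orderTop_add_le_mul
  rw [← sub_eq_zero, ← coeff_sub, ← mul_sub]
  exact coeff_eq_zero_of_lt_orderTop ((WithTop.coe_lt_coe.mpr hk).trans_le le_orderTop_mul)

theorem order_sub_mul_le_of_eqOn_coeff_Iio (hw : f - g * w ≠ 0)
    (h : EqOn w.coeff u.coeff (Iio ((f - g * u).order - g.order))) :
    (f - g * u).order ≤ (f - g * w).order := by
  refine (le_order_iff_forall hw).mpr fun k hk ↦ ?_
  rw [coeff_sub, coeff_mul_eqOn_Iio h hk, ← coeff_sub]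
  exact coeff_eq_zero_of_lt_order hk

theorem order_lt_orderTop_sub_mul_single {q : R} (hv : v ≠ 0)
    (hq : v.leadingCoeff = g.leadingCoeff * q) :
    v.order < (v - g * single (v.order - g.order) q).orderTop := by
  have hgq : g.leadingCoeff * q ≠ 0 := hq ▸ leadingCoeff_ne_zero.mpr hv
  have hg : g ≠ 0 := leadingCoeff_ne_zero.mp (left_ne_zero_of_mul hgq)
  have hmul : g.leadingCoeff * (single (v.order - g.order) q).leadingCoeff ≠ 0 := by
    rwa [leadingCoeff_of_single]
  refine le_orderTop_of_leadingCoeff_eq (order_eq_orderTop_of_ne_zero hv).symm ?_ ?_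
  · rw [orderTop_mul_of_ne_zero hmul, orderTop_single (right_ne_zero_of_mul hgq),
      ← order_eq_orderTop_of_ne_zero hg, ← WithTop.coe_add, add_sub_cancel]
  · rw [leadingCoeff_mul_of_ne_zero hmul, leadingCoeff_of_single, hq]

theorem laurentSeries_division_general (f g : HahnSeries Γ R) :
    (∃ u : HahnSeries Γ R, f = g * u) ∨
    (∃ u v : HahnSeries Γ R, f = g * u + v ∧ v ≠ 0 ∧
      ¬ ∃ q : R, v.leadingCoeff = g.leadingCoeff * q) := by
  by_contra! ⟨not_mul, exists_leadingCoeff_eq⟩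
  have remainder_ne_zero (u : HahnSeries Γ R) : f - g * u ≠ 0 := sub_ne_zero.mpr (not_mul u)
  obtain ⟨u, u_max⟩ := exists_forall_le_of_eqOn_coeff_Iio
    (e := fun u ↦ (f - g * u).order - g.order) fun u w h ↦
      sub_le_sub_right (order_sub_mul_le_of_eqOn_coeff_Iio (remainder_ne_zero w) h) _
  obtain ⟨q, hq⟩ := exists_leadingCoeff_eq u _ (add_sub_cancel _ _).symm (remainder_ne_zero u)
  let t : HahnSeries Γ R := single ((f - g * u).order - g.order) q
  have eqOn_add : EqOn (u + t).coeff u.coeff (Iio ((f - g * u).order - g.order)) := fun k hk ↦ by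
    rw [coeff_add, coeff_single_of_ne (ne_of_lt hk), add_zero]
  have order_lt : (f - g * u).order < (f - g * (u + t)).order := by
    rw [← WithTop.coe_lt_coe, order_eq_orderTop_of_ne_zero (remainder_ne_zero (u + t)), mul_add,
      ← sub_sub]
    exact order_lt_orderTop_sub_mul_single (remainder_ne_zero u) hq
  exact order_lt.not_ge ((sub_le_sub_iff_right _).mp (u_max (u + t) eqOn_add))

end Division

/-- Proposition 1 (σ = 1 case): for Laurent series `f, g` with `g ≠ 0`, either `f = g u`,
or `f = g u + v` with `v ≠ 0` and `ψ g` does not right-divide `ψ v`. -/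
theorem laurentSeries_division {R : Type*} [Ring R] [IsDomain R]
    (f g : LaurentSeries R) (hg : g ≠ 0) :
    (∃ u : LaurentSeries R, f = g * u) ∨
    (∃ u v : LaurentSeries R, f = g * u + v ∧ v ≠ 0 ∧ ¬ ∃ q : R, psi v = psi g * q) := by
  simpa only [psi, leadingCoeff_eq] using laurentSeries_division_general f g
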